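/- arXiv:2511.22688 — 3 statements merged into one kernel-verified Lean document; each statement's English description precedes it below -/
import Mathlib

section
/- Let d ≥ 1, let b : (0,1) × ℝ^d → ℝ^d be continuously differentiable, let ρ : (0,1) × ℝ^d → ℝ be twice continuously differentiable, strictly positive, and satisfy the continuity equation ∂_t ρ(t,x) + ∇·(b(t,·) ρ(t,·))(x) = 0 for all t, x. Let r : (0,1) × ℝ^d → ℝ be such that x ↦ r(t,x) is twice continuously differentiable and (t,x) ↦ r(t,x) is continuously differentiable, let F : (0,1) → ℝ be differentiable, let ε : (0,1) → ℝ be arbitrary, and define s(t,x) = ∇_x (log ρ(t,·))(x) and ρ̂(t,x) = ρ(t,x) · exp(r(t,x) + F(t)). Then for all t ∈ (0,1) and x ∈ ℝ^d: ∂_t ρ̂(t,x) + ∇·(b(t,·) ρ̂(t,·))(x) = ε(t) · ∇·( (−s(t,·) − ∇_x r(t,·)) ρ̂(t,·) + ∇_x ρ̂(t,·) )(x) + (⟪b(t,x), ∇_x r(t,x)⟫ + ∂_t r(t,x) + F'(t)) · ρ̂(t,x). -/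
open Set
open scoped RealInnerProductSpace

noncomputable section

/-- Divergence of a vector field: the trace of its Fréchet derivative. -/
def div' {d : ℕ} (v : EuclideanSpace ℝ (Fin d) → EuclideanSpace ℝ (Fin d))
    (x : EuclideanSpace ℝ (Fin d)) : ℝ :=
  LinearMap.trace ℝ (EuclideanSpace ℝ (Fin d)) (fderiv ℝ v x).toLinearMap

theorem div'_smul {d : ℕ} {f : EuclideanSpace ℝ (Fin d) → ℝ}
    {v : EuclideanSpace ℝ (Fin d) → EuclideanSpace ℝ (Fin d)} {x : EuclideanSpace ℝ (Fin d)}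
    (hf : DifferentiableAt ℝ f x) (hv : DifferentiableAt ℝ v x) :
    div' (fun y => f y • v y) x = f x * div' v x + fderiv ℝ f x (v x) := by
  unfold div'
  rw [fderiv_fun_smul hf hv]
  have h : (f x • fderiv ℝ v x + (fderiv ℝ f x).smulRight (v x)).toLinearMap =
      f x • (fderiv ℝ v x).toLinearMap + (fderiv ℝ f x).toLinearMap.smulRight (v x) := by
    ext; rfl
  rw [h, map_add, map_smul, LinearMap.trace_smulRight]
  rfl

theorem tilted_fokker_planck_with_diffusion
    (d : ℕ) (hd : 1 ≤ d)
    (b : ℝ → EuclideanSpace ℝ (Fin d) → EuclideanSpace ℝ (Fin d))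
    (ρ r : ℝ → EuclideanSpace ℝ (Fin d) → ℝ)
    (F ε : ℝ → ℝ)
    (s : ℝ → EuclideanSpace ℝ (Fin d) → EuclideanSpace ℝ (Fin d))
    (ρhat : ℝ → EuclideanSpace ℝ (Fin d) → ℝ)
    (hb : ContDiffOn ℝ 1 (fun p : ℝ × EuclideanSpace ℝ (Fin d) => b p.1 p.2)
      (Ioo (0:ℝ) 1 ×ˢ univ))
    (hρ : ContDiffOn ℝ 2 (fun p : ℝ × EuclideanSpace ℝ (Fin d) => ρ p.1 p.2)
      (Ioo (0:ℝ) 1 ×ˢ univ))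
    (hρpos : ∀ t ∈ Ioo (0:ℝ) 1, ∀ x, 0 < ρ t x)
    (hce : ∀ t ∈ Ioo (0:ℝ) 1, ∀ x,
      deriv (fun τ => ρ τ x) t + div' (fun y => ρ t y • b t y) x = 0)
    (hrx : ∀ t ∈ Ioo (0:ℝ) 1, ContDiff ℝ 2 (r t))
    (hr : ContDiffOn ℝ 1 (fun p : ℝ × EuclideanSpace ℝ (Fin d) => r p.1 p.2)
      (Ioo (0:ℝ) 1 ×ˢ univ))
    (hF : DifferentiableOn ℝ F (Ioo (0:ℝ) 1))
    (hs : ∀ t x, s t x = gradient (fun y => Real.log (ρ t y)) x)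
    (hρhat : ∀ t x, ρhat t x = ρ t x * Real.exp (r t x + F t)) :
    ∀ t ∈ Ioo (0:ℝ) 1, ∀ x,
      deriv (fun τ => ρhat τ x) t + div' (fun y => ρhat t y • b t y) x =
        ε t * div' (fun y =>
            ρhat t y • (-(s t y) - gradient (r t) y) + gradient (ρhat t) y) x
        + (⟪b t x, gradient (r t) x⟫ + deriv (fun τ => r τ x) t + deriv F t) * ρhat t x := by
  intro t ht x
  have hnhds : ∀ y : EuclideanSpace ℝ (Fin d),
      (Ioo (0:ℝ) 1 ×ˢ (univ : Set (EuclideanSpace ℝ (Fin d)))) ∈ nhds (t, y) := fun y =>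
    (isOpen_Ioo.prod isOpen_univ).mem_nhds ⟨ht, mem_univ _⟩
  have hbj : ∀ y, DifferentiableAt ℝ (fun p : ℝ × EuclideanSpace ℝ (Fin d) => b p.1 p.2) (t, y) :=
    fun y => (hb.contDiffAt (hnhds y)).differentiableAt (by norm_num)
  have hρj : ∀ y, DifferentiableAt ℝ (fun p : ℝ × EuclideanSpace ℝ (Fin d) => ρ p.1 p.2) (t, y) :=
    fun y => (hρ.contDiffAt (hnhds y)).differentiableAt (by norm_num)
  have hrj : ∀ y, DifferentiableAt ℝ (fun p : ℝ × EuclideanSpace ℝ (Fin d) => r p.1 p.2) (t, y) :=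
    fun y => (hr.contDiffAt (hnhds y)).differentiableAt (by norm_num)
  have hbd : ∀ y, DifferentiableAt ℝ (b t) y := fun y =>
    (hbj y).comp y (f := fun z => (t, z)) (by fun_prop)
  have hρd : ∀ y, DifferentiableAt ℝ (ρ t) y := fun y =>
    (hρj y).comp y (f := fun z => (t, z)) (by fun_prop)
  have hrd : ∀ y, DifferentiableAt ℝ (r t) y := fun y =>
    (hrj y).comp y (f := fun z => (t, z)) (by fun_prop)
  have hρt : DifferentiableAt ℝ (fun τ => ρ τ x) t :=
    (hρj x).comp t (f := fun τ => (τ, x)) (by fun_prop)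
  have hrt : DifferentiableAt ℝ (fun τ => r τ x) t :=
    (hrj x).comp t (f := fun τ => (τ, x)) (by fun_prop)
  have hFt : DifferentiableAt ℝ F t := hF.differentiableAt (isOpen_Ioo.mem_nhds ht)
  have hE : ∀ y, HasFDerivAt (fun y => Real.exp (r t y + F t))
      (Real.exp (r t y + F t) • fderiv ℝ (r t) y) y := fun y =>
    ((hrd y).hasFDerivAt.add_const (F t)).exp
  -- the diffusion term vanishes
  have hzero : (fun y => ρhat t y • (-(s t y) - gradient (r t) y) + gradient (ρhat t) y)
      = fun _ => 0 := by
    funext y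
    have h1 : ρhat t = fun y => ρ t y * Real.exp (r t y + F t) := funext (hρhat t)
    have hpos := (hρpos t ht y).ne'
    have h2 := ((hρd y).hasFDerivAt.mul (hE y)).fderiv
    have h3 := ((hρd y).hasFDerivAt.log hpos).fderiv
    have h4 : gradient (ρhat t) y = ρhat t y • (s t y + gradient (r t) y) := by
      rw [hs, h1]
      refine ext_inner_right ℝ fun z => ?_
      have h2' : fderiv ℝ (fun y => ρ t y * Real.exp (r t y + F t)) y = _ := h2
      rw [real_inner_smul_left, inner_add_left, inner_gradient_left, inner_gradient_left,
        inner_gradient_left, h2', h3]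
      simp only [add_apply, smul_apply, smul_eq_mul]
      field_simp
      ring
    rw [h4]
    module
  have hdiff : div' (fun y => ρhat t y • (-(s t y) - gradient (r t) y) + gradient (ρhat t) y) x
      = 0 := by
    rw [hzero]; simp [div']
  have hdt : deriv (fun τ => ρhat τ x) t = deriv (fun τ => ρ τ x) t * Real.exp (r t x + F t)
      + ρ t x * (Real.exp (r t x + F t) * (deriv (fun τ => r τ x) t + deriv F t)) := by
    have h1 : (fun τ => ρhat τ x) = fun τ => ρ τ x * Real.exp (r τ x + F τ) :=
      funext fun τ => hρhat τ x
    rw [h1]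
    exact (hρt.hasDerivAt.mul (hrt.hasDerivAt.add hFt.hasDerivAt).exp).deriv
  have hdiv : div' (fun y => ρhat t y • b t y) x
      = Real.exp (r t x + F t) * div' (fun y => ρ t y • b t y) x
        + Real.exp (r t x + F t) * (ρ t x * ⟪b t x, gradient (r t) x⟫) := by
    have h1 : (fun y => ρhat t y • b t y)
        = fun y => Real.exp (r t y + F t) • (ρ t y • b t y) := by
      funext y
      rw [hρhat, smul_smul, mul_comm]
    have h5 : ⟪b t x, gradient (r t) x⟫ = fderiv ℝ (r t) x (b t x) := by
      rw [real_inner_comm]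
      unfold gradient
      rw [InnerProductSpace.toDual_symm_apply]
    rw [h1, div'_smul (hE x).differentiableAt (v := fun y => ρ t y • b t y)
      ((hρd x).smul (hbd x)), (hE x).fderiv, h5]
    simp
    ring
  rw [hdiff, hdt, hdiv, hρhat]
  have := hce t ht x
  linear_combination Real.exp (r t x + F t) * this
end
end

section
/- Let d ≥ 1, let I ⊆ ℝ be an open interval, let b : I × ℝ^d → ℝ^d be continuous, and let X : I × I × ℝ^d → ℝ^d be continuously differentiable in all arguments and satisfy: (i) X(t,t,x) = x for all t ∈ I, x ∈ ℝ^d; (ii) the flow property X(s,u,X(t,s,x)) = X(t,u,x) for all t,s,u ∈ I and x ∈ ℝ^d; (iii) the tangent condition ∂_s X(t,s,x) = b(s, X(t,s,x)) for all t,s ∈ I, x ∈ ℝ^d, where ∂_s denotes the derivative in the second time argument. Then X satisfies the Eulerian equation: for all s,u ∈ I and x ∈ ℝ^d, ∂_s X(s,u,x) + (D_x X(s,u,·))(x) (b(s,x)) = 0, where ∂_s now denotes the derivative in the first time argument and D_x X(s,u,·)(x) is the Fréchet derivative of the map y ↦ X(s,u,y) at x. -/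
open Set

noncomputable section

theorem flow_map_eulerian_equation
    (d : ℕ) (hd : 1 ≤ d)
    (I : Set ℝ) (hIopen : IsOpen I) (hIconn : I.OrdConnected)
    (b : ℝ → EuclideanSpace ℝ (Fin d) → EuclideanSpace ℝ (Fin d))
    (X : ℝ → ℝ → EuclideanSpace ℝ (Fin d) → EuclideanSpace ℝ (Fin d))
    (hb : ContinuousOn (fun p : ℝ × EuclideanSpace ℝ (Fin d) => b p.1 p.2) (I ×ˢ univ))
    (hX : ContDiffOn ℝ 1
      (fun p : ℝ × ℝ × EuclideanSpace ℝ (Fin d) => X p.1 p.2.1 p.2.2)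
      (I ×ˢ I ×ˢ univ))
    (hid : ∀ t ∈ I, ∀ x, X t t x = x)
    (hflow : ∀ t ∈ I, ∀ s ∈ I, ∀ u ∈ I, ∀ x, X s u (X t s x) = X t u x)
    (htangent : ∀ t ∈ I, ∀ s ∈ I, ∀ x,
      HasDerivAt (fun σ => X t σ x) (b s (X t s x)) s) :
    ∀ s ∈ I, ∀ u ∈ I, ∀ x,
      deriv (fun σ => X σ u x) s + fderiv ℝ (fun y => X s u y) x (b s x) = 0 := by
  intro s hs u hu x
  have hF : HasFDerivAt (fun p : ℝ × ℝ × EuclideanSpace ℝ (Fin d) => X p.1 p.2.1 p.2.2)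
      (fderiv ℝ (fun p : ℝ × ℝ × EuclideanSpace ℝ (Fin d) => X p.1 p.2.1 p.2.2) (s, u, x))
      (s, u, x) := by
    have hmem : I ×ˢ I ×ˢ (univ : Set (EuclideanSpace ℝ (Fin d))) ∈ nhds (s, u, x) :=
      (hIopen.prod (hIopen.prod isOpen_univ)).mem_nhds ⟨hs, hu, mem_univ _⟩
    exact ((hX.contDiffAt hmem).differentiableAt (by norm_num)).hasFDerivAt
  generalize fderiv ℝ (fun p : ℝ × ℝ × EuclideanSpace ℝ (Fin d) => X p.1 p.2.1 p.2.2)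
    (s, u, x) = L at hF
  -- derivative in the first time argument
  have h1 : HasDerivAt (fun σ => X σ u x) (L (1, 0, 0)) s := by
    have hc : HasDerivAt (fun σ : ℝ => (σ, u, x)) (1, 0, 0) s :=
      (hasDerivAt_id s).prodMk ((hasDerivAt_const s u).prodMk (hasDerivAt_const s x))
    exact HasFDerivAt.comp_hasDerivAt (x := s) (f := fun σ : ℝ => (σ, u, x)) hF hc
  -- derivative in space
  have h2 : fderiv ℝ (fun y => X s u y) x (b s x) = L (0, 0, b s x) := by
    have hc : HasFDerivAt (fun y : EuclideanSpace ℝ (Fin d) => (s, u, y))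
        ((0 : EuclideanSpace ℝ (Fin d) →L[ℝ] ℝ).prod
          ((0 : EuclideanSpace ℝ (Fin d) →L[ℝ] ℝ).prod (ContinuousLinearMap.id ℝ _))) x :=
      (hasFDerivAt_const s x).prodMk ((hasFDerivAt_const u x).prodMk (hasFDerivAt_id x))
    have h := HasFDerivAt.comp x (f := fun y : EuclideanSpace ℝ (Fin d) => (s, u, y)) hF hc
    have h' : HasFDerivAt (fun y => X s u y) _ x := h
    rw [h'.fderiv]
    rfl
  -- derivative along the trajectory
  have h3 : HasDerivAt (fun σ => X σ u (X s σ x)) (L (1, 0, b s x)) s := by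
    have ht := htangent s hs s hs x
    rw [hid s hs x] at ht
    have hc : HasDerivAt (fun σ : ℝ => (σ, u, X s σ x)) (1, 0, b s x) s :=
      (hasDerivAt_id s).prodMk ((hasDerivAt_const s u).prodMk ht)
    have hF' := hF
    rw [show (s, u, x) = (fun σ : ℝ => (σ, u, X s σ x)) s by simp [hid s hs x]] at hF'
    exact HasFDerivAt.comp_hasDerivAt (x := s) hF' hc
  have h4 : HasDerivAt (fun σ => X σ u (X s σ x)) 0 s := by
    refine (hasDerivAt_const s (X s u x)).congr_of_eventuallyEq ?_
    filter_upwards [hIopen.mem_nhds hs] with σ hσ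
    exact hflow s hs σ hσ u hu x
  rw [h1.deriv, h2, ← map_add]
  simpa using h3.unique h4
end
end

section
/- Let d ≥ 1, let I ⊆ ℝ be an open interval, let b : I × ℝ^d → ℝ^d be continuous, let X : I × ℝ^d → ℝ^d be continuously differentiable and satisfy the Eulerian equation ∂_t X(t,x) + (D_x X(t,·))(x)(b(t,x)) = 0 for all t ∈ I and x ∈ ℝ^d, let r : ℝ^d → ℝ be continuously differentiable, and let x : I → ℝ^d be differentiable with x'(t) = b(t, x(t)) for all t ∈ I. Then: (i) the function t ↦ r(X(t, x(t))) is constant on I; and (ii) for all t ∈ I, the derivative of t ↦ t · r(X(t, x(t))) equals r(X(t, x(t))). -/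
open Set

noncomputable section

theorem flow_map_lookahead_weight_rate
    (d : ℕ) (hd : 1 ≤ d)
    (I : Set ℝ) (hIopen : IsOpen I) (hIconn : I.OrdConnected)
    (b : ℝ → EuclideanSpace ℝ (Fin d) → EuclideanSpace ℝ (Fin d))
    (X : ℝ → EuclideanSpace ℝ (Fin d) → EuclideanSpace ℝ (Fin d))
    (r : EuclideanSpace ℝ (Fin d) → ℝ)
    (x : ℝ → EuclideanSpace ℝ (Fin d))
    (hb : ContinuousOn (fun p : ℝ × EuclideanSpace ℝ (Fin d) => b p.1 p.2) (I ×ˢ univ))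
    (hX : ContDiffOn ℝ 1
      (fun p : ℝ × EuclideanSpace ℝ (Fin d) => X p.1 p.2) (I ×ˢ univ))
    (heuler : ∀ t ∈ I, ∀ y,
      deriv (fun τ => X τ y) t + fderiv ℝ (X t) y (b t y) = 0)
    (hr : ContDiff ℝ 1 r)
    (hx : ∀ t ∈ I, HasDerivAt x (b t (x t)) t) :
    (∀ t ∈ I, ∀ t' ∈ I, r (X t (x t)) = r (X t' (x t'))) ∧
    (∀ t ∈ I, HasDerivAt (fun τ => τ * r (X τ (x τ))) (r (X t (x t))) t) := by
  have key : ∀ t ∈ I, HasDerivAt (fun τ => r (X τ (x τ))) 0 t := by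
    intro t ht
    have hnhds : (I ×ˢ (univ : Set (EuclideanSpace ℝ (Fin d)))) ∈ nhds (t, x t) :=
      (hIopen.prod isOpen_univ).mem_nhds ⟨ht, mem_univ _⟩
    have hF := ((hX.contDiffAt hnhds).differentiableAt one_ne_zero).hasFDerivAt
    set L := fderiv ℝ (fun p : ℝ × EuclideanSpace ℝ (Fin d) => X p.1 p.2) (t, x t) with hL
    have h1 : HasDerivAt (fun τ => X τ (x t)) (L (1, 0)) t :=
      HasFDerivAt.comp_hasDerivAt (f := fun τ : ℝ => (τ, x t)) t hF
        ((hasDerivAt_id t).prodMk (hasDerivAt_const t (x t)))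
    have h2 : HasFDerivAt (X t)
        (L.comp (ContinuousLinearMap.inr ℝ ℝ (EuclideanSpace ℝ (Fin d)))) (x t) :=
      HasFDerivAt.comp (f := fun y => (t, y)) (x t) hF (hasFDerivAt_prodMk_right t (x t))
    have h3 : HasDerivAt (fun τ => X τ (x τ)) (L (1, b t (x t))) t :=
      HasFDerivAt.comp_hasDerivAt (f := fun τ : ℝ => (τ, x τ)) t hF
        ((hasDerivAt_id t).prodMk (hx t ht))
    have h4 : L (1, b t (x t)) = 0 := by
      have h := heuler t ht (x t)
      rw [h1.deriv, h2.fderiv] at h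
      rw [← h, ContinuousLinearMap.comp_apply, ContinuousLinearMap.inr_apply, ← map_add]
      simp
    rw [h4] at h3
    have h5 := ((hr.differentiable one_ne_zero) (X t (x t))).hasFDerivAt
    have h6 := HasFDerivAt.comp_hasDerivAt (f := fun τ : ℝ => X τ (x τ)) t h5 h3
    rw [map_zero] at h6
    exact h6
  refine ⟨fun t ht t' ht' => ?_, fun t ht => ?_⟩
  · refine hIopen.is_const_of_deriv_eq_zero hIconn.isPreconnected
      (f := fun τ => r (X τ (x τ)))
      (fun s hs => (key s hs).differentiableAt.differentiableWithinAt)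
      (fun s hs => (key s hs).deriv) ht ht'
  · have h := (hasDerivAt_id t).mul (key t ht)
    have e : 1 * r (X t (x t)) + id t * 0 = r (X t (x t)) := by simp
    rw [e] at h
    exact h
end
end
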